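/- Let ψ : ℝ_{>0} → ℝ_{>0} be a function with τ(ψ) = −b_n. If the function t ↦ ψ(t)·e^{−b_n t} is bounded on ℝ_{>0}, then S(ψ)^c = ∅, i.e., every g ∈ SL_n(ℝ) is ψ-Diophantine for the standard representation. -/

import Mathlib

open MeasureTheory Filter

attribute [local instance] Matrix.frobeniusNormedAddCommGroup

noncomputable section

/-- The Euclidean norm on `ι → ℝ`. -/
def eucNorm {ι : Type*} [Fintype ι] (v : ι → ℝ) : ℝ := Real.sqrt (∑ i, (v i) ^ 2)

/-- The first minimum of a set of vectors: the infimum of the Euclidean norms of its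
nonzero elements. -/
def firstMin {ι : Type*} [Fintype ι] (Λ : Set (ι → ℝ)) : ℝ :=
  sInf {r | ∃ v ∈ Λ, v ≠ 0 ∧ eucNorm v = r}

/-- The diagonal matrix `a_t = diag(e^{b₁ t}, …, e^{bₙ t})`. -/
def aMat {n : ℕ} (b : Fin n → ℝ) (t : ℝ) : Matrix (Fin n) (Fin n) ℝ :=
  Matrix.diagonal fun i => Real.exp (b i * t)

/-- The standard lattice `ℤ^ι` inside `ι → ℝ`. -/
def intLat (ι : Type*) [Fintype ι] : Set (ι → ℝ) :=
  {v | ∃ m : ι → ℤ, v = fun i => (m i : ℝ)}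

/-- `SL_n(ℝ)` as the set of real `n × n` matrices of determinant one. -/
def SLset (n : ℕ) : Set (Matrix (Fin n) (Fin n) ℝ) := {g | g.det = 1}

/-- The set of `ψ`-Diophantine elements of `SL_n(ℝ)` for the standard representation. -/
def SDio {n : ℕ} (b : Fin n → ℝ) (ψ : ℝ → ℝ) : Set (Matrix (Fin n) (Fin n) ℝ) :=
  {g | g ∈ SLset n ∧ ∃ C > 0, ∀ t > 0,
    C * ψ t ≤ firstMin ((fun v => (aMat b t * g).mulVec v) '' intLat (Fin n))}

/-- `τ(ψ) = liminf_{t → ∞} (-ln ψ(t))/t`, as an extended real number. -/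
def tauE (ψ : ℝ → ℝ) : EReal :=
  liminf (fun t : ℝ => ((-Real.log (ψ t) / t : ℝ) : EReal)) atTop

/-!
Let `c` be the least of the `bᵢ`. For `t > 0` the matrix `a_t` stretches every vector by a factor of
at least `e^{ct}`, whereas `g` shrinks vectors by a factor of at most `‖g⁻¹‖` (Frobenius norm).
Nonzero integer vectors have norm at least `1`, so `δ(a_t g ℤⁿ) ≥ ‖g⁻¹‖⁻¹ e^{ct}`, and boundedness
of `ψ(t) e^{-ct}` says that `ψ(t)` is at most a constant multiple of the right-hand side.
-/

open scoped Matrix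

section EuclideanNorm

variable {ι κ : Type*} [Fintype ι] [Fintype κ]

lemma eucNorm_eq_norm_toLp (v : ι → ℝ) : eucNorm v = ‖WithLp.toLp 2 v‖ := by
  simp only [eucNorm, EuclideanSpace.norm_eq, Real.norm_eq_abs, sq_abs]

lemma abs_apply_le_eucNorm (v : ι → ℝ) (i : ι) : |v i| ≤ eucNorm v := by
  rw [eucNorm_eq_norm_toLp]
  exact PiLp.norm_apply_le (WithLp.toLp 2 v) i

lemma eucNorm_mulVec_le (A : Matrix κ ι ℝ) (v : ι → ℝ) :
    eucNorm (A *ᵥ v) ≤ ‖A‖ * eucNorm v := by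
  simpa only [eucNorm_eq_norm_toLp, ← Matrix.frobenius_norm_replicateCol (ι := Unit),
    Matrix.replicateCol_mulVec] using Matrix.frobenius_norm_mul A (Matrix.replicateCol Unit v)

lemma eucNorm_le_norm_inv_mul_eucNorm_mulVec [DecidableEq ι] {g : Matrix ι ι ℝ}
    (hg : IsUnit g.det) (v : ι → ℝ) : eucNorm v ≤ ‖g⁻¹‖ * eucNorm (g *ᵥ v) := by
  simpa only [Matrix.mulVec_mulVec, Matrix.nonsing_inv_mul g hg, Matrix.one_mulVec]
    using eucNorm_mulVec_le g⁻¹ (g *ᵥ v)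

lemma mul_eucNorm_le_eucNorm_diagonal_mulVec [DecidableEq ι] {d : ι → ℝ} {r : ℝ} (hr : 0 ≤ r)
    (hd : ∀ i, r ≤ |d i|) (v : ι → ℝ) : r * eucNorm v ≤ eucNorm (Matrix.diagonal d *ᵥ v) := by
  refine Real.le_sqrt_of_sq_le ?_
  calc (r * eucNorm v) ^ 2 = ∑ i, r ^ 2 * v i ^ 2 := by
        rw [mul_pow, eucNorm, Real.sq_sqrt (by positivity), Finset.mul_sum]
    _ ≤ ∑ i, d i ^ 2 * v i ^ 2 := by
        gcongr ∑ i, ?_ * _ with i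
        exact sq_le_sq.mpr ((abs_of_nonneg hr).trans_le (hd i))
    _ = ∑ i, (Matrix.diagonal d *ᵥ v) i ^ 2 := by
        simp only [Matrix.mulVec_diagonal, mul_pow]

end EuclideanNorm

section FirstMinimum

variable {ι κ : Type*} [Fintype ι] [Fintype κ]

lemma one_le_eucNorm_of_mem_intLat {v : ι → ℝ} (hv : v ∈ intLat ι) (hv0 : v ≠ 0) :
    1 ≤ eucNorm v := by
  obtain ⟨m, rfl⟩ := hv
  obtain ⟨i, hi⟩ := Function.ne_iff.mp hv0
  have hmi : m i ≠ 0 := Int.cast_ne_zero.mp hi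
  calc (1 : ℝ) ≤ |(m i : ℝ)| := mod_cast Int.one_le_abs hmi
    _ ≤ eucNorm fun i => (m i : ℝ) := abs_apply_le_eucNorm (fun i => (m i : ℝ)) i

lemma le_firstMin {Λ : Set (ι → ℝ)} (hΛ : ∃ v ∈ Λ, v ≠ 0) {r : ℝ}
    (hr : ∀ v ∈ Λ, v ≠ 0 → r ≤ eucNorm v) : r ≤ firstMin Λ := by
  obtain ⟨v, hv, hv0⟩ := hΛ
  refine le_csInf ⟨_, v, hv, hv0, rfl⟩ ?_
  rintro _ ⟨w, hw, hw0, rfl⟩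
  exact hr w hw hw0

lemma le_firstMin_mulVec_image_intLat [Nonempty ι] {A : Matrix κ ι ℝ} {r : ℝ} (hr : 0 < r)
    (h : ∀ v ∈ intLat ι, v ≠ 0 → r ≤ eucNorm (A *ᵥ v)) :
    r ≤ firstMin ((fun v => A *ᵥ v) '' intLat ι) := by
  refine le_firstMin ?_ ?_
  · have hone : (1 : ι → ℝ) ∈ intLat ι := ⟨1, funext fun _ => Int.cast_one.symm⟩
    refine ⟨_, ⟨1, hone, rfl⟩, fun h0 : A *ᵥ 1 = 0 => ?_⟩
    have hle : r ≤ 0 := by simpa [h0, eucNorm] using h 1 hone one_ne_zero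
    exact hle.not_gt hr
  · rintro _ ⟨v, hv, rfl⟩ hAv
    exact h v hv fun hv0 : v = 0 => hAv (by simp only [hv0, Matrix.mulVec_zero])

variable [DecidableEq ι] [Nonempty ι] {g : Matrix ι ι ℝ}

lemma norm_inv_pos_of_isUnit_det (hg : IsUnit g.det) : 0 < ‖g⁻¹‖ :=
  norm_pos_iff.mpr (Matrix.isUnit_nonsing_inv_iff.mpr (g.isUnit_iff_isUnit_det.mpr hg)).ne_zero

lemma inv_norm_inv_mul_le_firstMin (hg : IsUnit g.det) {A : Matrix κ ι ℝ} {r : ℝ} (hr : 0 < r)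
    (hA : ∀ w, r * eucNorm w ≤ eucNorm (A *ᵥ w)) :
    ‖g⁻¹‖⁻¹ * r ≤ firstMin ((fun v => (A * g) *ᵥ v) '' intLat ι) := by
  have hginv : 0 < ‖g⁻¹‖ := norm_inv_pos_of_isUnit_det hg
  refine le_firstMin_mulVec_image_intLat (by positivity) fun v hv hv0 => ?_
  rw [inv_mul_le_iff₀ hginv, ← Matrix.mulVec_mulVec]
  calc r ≤ r * eucNorm v := le_mul_of_one_le_right hr.le (one_le_eucNorm_of_mem_intLat hv hv0)
    _ ≤ r * (‖g⁻¹‖ * eucNorm (g *ᵥ v)) := by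
        gcongr
        exact eucNorm_le_norm_inv_mul_eucNorm_mulVec hg v
    _ = ‖g⁻¹‖ * (r * eucNorm (g *ᵥ v)) := mul_left_comm _ _ _
    _ ≤ ‖g⁻¹‖ * eucNorm (A *ᵥ g *ᵥ v) := by
        gcongr
        exact hA _

end FirstMinimum

section DiagonalFlow

variable {n : ℕ} {b : Fin n → ℝ} {c t : ℝ}

lemma exp_mul_eucNorm_le_eucNorm_aMat_mulVec (hc : ∀ i, c ≤ b i) (ht : 0 ≤ t) (v : Fin n → ℝ) :
    Real.exp (c * t) * eucNorm v ≤ eucNorm (aMat b t *ᵥ v) := by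
  refine mul_eucNorm_le_eucNorm_diagonal_mulVec (Real.exp_pos _).le (fun i => ?_) v
  rw [Real.abs_exp]
  gcongr
  exact hc i

lemma inv_norm_inv_mul_exp_le_firstMin [NeZero n] (hc : ∀ i, c ≤ b i) (ht : 0 ≤ t)
    {g : Matrix (Fin n) (Fin n) ℝ} (hg : IsUnit g.det) :
    ‖g⁻¹‖⁻¹ * Real.exp (c * t) ≤ firstMin ((fun v => (aMat b t * g) *ᵥ v) '' intLat (Fin n)) :=
  inv_norm_inv_mul_le_firstMin hg (Real.exp_pos _) (exp_mul_eucNorm_le_eucNorm_aMat_mulVec hc ht)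

end DiagonalFlow

theorem SDio_compl_standard_empty_of_bounded_general {n : ℕ} [NeZero n] {b : Fin n → ℝ} {c : ℝ}
    (hc : ∀ i, c ≤ b i) {ψ : ℝ → ℝ} (hbdd : ∃ M : ℝ, ∀ t > 0, ψ t * Real.exp (-c * t) ≤ M) :
    SLset n \ SDio b ψ = ∅ := by
  refine Set.sdiff_eq_empty.mpr fun g hg => ?_
  have hdet : IsUnit g.det := (show g.det = 1 from hg) ▸ isUnit_one
  have hginv : 0 < ‖g⁻¹‖ := norm_inv_pos_of_isUnit_det hdet
  obtain ⟨M, hM⟩ := hbdd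
  have hψ (t : ℝ) (ht : 0 < t) : ψ t ≤ max M 1 * Real.exp (c * t) := by
    rw [← div_le_iff₀ (Real.exp_pos _), div_eq_mul_inv, ← Real.exp_neg, ← neg_mul]
    exact (hM t ht).trans (le_max_left M 1)
  refine ⟨hg, ‖g⁻¹‖⁻¹ * (max M 1)⁻¹, by positivity, fun t ht => ?_⟩
  calc ‖g⁻¹‖⁻¹ * (max M 1)⁻¹ * ψ t = ‖g⁻¹‖⁻¹ * ((max M 1)⁻¹ * ψ t) := mul_assoc _ _ _
    _ ≤ ‖g⁻¹‖⁻¹ * Real.exp (c * t) := by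
        gcongr
        exact (inv_mul_le_iff₀ (by positivity)).mpr (hψ t ht)
    _ ≤ _ := inv_norm_inv_mul_exp_le_firstMin hc ht.le hdet

theorem SDio_compl_standard_empty_of_bounded
    (n : ℕ) (hn : 2 ≤ n) (b : Fin n → ℝ)
    (hmono : ∀ i j : Fin n, i ≤ j → b j ≤ b i)
    (hsum : ∑ i, b i = 0) (hb : b ≠ 0)
    (ψ : ℝ → ℝ) (hψpos : ∀ t > 0, 0 < ψ t)
    (hτ : tauE ψ = ((-(b ⟨n - 1, by omega⟩) : ℝ) : EReal))
    (hbdd : ∃ M : ℝ, ∀ t > 0, ψ t * Real.exp (-(b ⟨n - 1, by omega⟩) * t) ≤ M) :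
    SLset n \ SDio b ψ = ∅ := by
  have : NeZero n := ⟨by omega⟩
  exact SDio_compl_standard_empty_of_bounded_general
    (fun i => hmono i _ (Nat.le_sub_one_of_lt i.isLt)) hbdd

end
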